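/- arXiv:2412.17167 — 5 statements merged into one kernel-verified Lean document; each statement's English description precedes it below -/
import Mathlib

section
/- (Kawamura's embedding, relations form.) Let n ≥ 2, k ≥ 1 and m := k(n−1)+1. Let A be a unital C*-algebra and let (S_1, …, S_n) be a Cuntz family of n isometries in A. Define elements T_1, …, T_m of A by: T_{j + l(n−1)} := S_n^l S_j for 1 ≤ j ≤ n−1 and 0 ≤ l ≤ k−1, and T_m := S_n^k. Then (T_1, …, T_m) is a Cuntz family of m isometries in A, i.e., T_a* T_b = δ_{ab}·1 for all a, b and ∑_{a=1}^m T_a T_a* = 1. -/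
theorem star_pow_mul_pow_self {R : Type*} [Semiring R] [StarRing R] {v : R}
    (hv : star v * v = 1) (l : ℕ) : star (v ^ l) * v ^ l = 1 := by
  induction l with
  | zero => simp
  | succ l ih =>
    rw [pow_succ, star_mul, mul_assoc, ← mul_assoc (star (v ^ l)), ih, one_mul, hv]

theorem star_pow_mul_mul_pow_mul {R : Type*} [Semiring R] [StarRing R] {v : R}
    (hv : star v * v = 1) (l d : ℕ) (x y : R) :
    star (v ^ l * x) * (v ^ (l + d) * y) = star x * (v ^ d * y) := by
  rw [star_mul, pow_add, mul_assoc, mul_assoc (v ^ l), ← mul_assoc (star (v ^ l)),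
    star_pow_mul_pow_self hv, one_mul]

theorem star_pow_mul_mul_pow_mul_of_lt {R : Type*} [Semiring R] [StarRing R] {v x : R}
    (hv : star v * v = 1) (hx : star x * v = 0) {l l' : ℕ} (h : l < l') (y : R) :
    star (v ^ l * x) * (v ^ l' * y) = 0 := by
  obtain ⟨d, rfl⟩ := Nat.exists_eq_add_of_lt h
  rw [add_assoc, star_pow_mul_mul_pow_mul hv, pow_succ', mul_assoc, ← mul_assoc, hx, zero_mul]

theorem sum_Icc_one_eq_sum_range {M : Type*} [AddCommMonoid M] (f : ℕ → M) (N : ℕ) :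
    ∑ a ∈ Finset.Icc 1 N, f a = ∑ i ∈ Finset.range N, f (i + 1) := by
  rw [← Finset.Ico_add_one_right_eq_Icc, Finset.sum_Ico_eq_sum_range]
  simp [add_comm]

theorem sum_Icc_one_add {M : Type*} [AddCommMonoid M] (f : ℕ → M) (N p : ℕ) :
    ∑ a ∈ Finset.Icc 1 (N + p), f a =
      ∑ a ∈ Finset.Icc 1 N, f a + ∑ j ∈ Finset.Icc 1 p, f (j + N) := by
  simp only [sum_Icc_one_eq_sum_range, Finset.sum_range_add]
  simp only [add_comm N, add_right_comm]

/-- Kawamura's embedding, relations form.  Given a Cuntz family `S 1, …, S n` of `n` isometries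
in a unital C*-algebra `A` and `m = k (n-1) + 1`, the elements
`T (j + l (n-1)) = (S n)^l * S j` (for `1 ≤ j ≤ n-1`, `0 ≤ l ≤ k-1`) and `T m = (S n)^k`
form a Cuntz family of `m` isometries in `A`. -/
theorem kawamura_family_is_cuntz
    {A : Type*} [CStarAlgebra A] (n k m : ℕ) (hn : 2 ≤ n) (hk : 1 ≤ k)
    (hm : m = k * (n - 1) + 1)
    (S T : ℕ → A)
    (hS1 : ∀ i ∈ Finset.Icc 1 n, ∀ j ∈ Finset.Icc 1 n,
      star (S i) * S j = if i = j then 1 else 0)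
    (hS2 : ∑ i ∈ Finset.Icc 1 n, S i * star (S i) = 1)
    (hT1 : ∀ j l : ℕ, 1 ≤ j → j ≤ n - 1 → l ≤ k - 1 →
      T (j + l * (n - 1)) = S n ^ l * S j)
    (hT2 : T m = S n ^ k) :
    (∀ a ∈ Finset.Icc 1 m, ∀ b ∈ Finset.Icc 1 m,
      star (T a) * T b = if a = b then 1 else 0) ∧
    ∑ a ∈ Finset.Icc 1 m, T a * star (T a) = 1 := by
  obtain ⟨p, rfl⟩ : ∃ p, n = p + 1 := ⟨n - 1, by omega⟩
  simp only [Nat.add_sub_cancel] at hm hT1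
  have hp : 1 ≤ p := by omega
  subst hm
  have hv : star (S (p + 1)) * S (p + 1) = 1 := by
    simpa using hS1 (p + 1) (by simp) (p + 1) (by simp)
  have hSv : ∀ j, 1 ≤ j → j ≤ p → star (S j) * S (p + 1) = 0 := by
    intro j h1 h2
    rw [hS1 j (by simp; omega) (p + 1) (by simp), if_neg (by omega)]
  have hdecomp : ∀ a, 1 ≤ a → a ≤ k * p →
      ∃ j l, 1 ≤ j ∧ j ≤ p ∧ l < k ∧ a = j + l * p := by
    intro a h1 h2
    refine ⟨(a - 1) % p + 1, (a - 1) / p, by omega, Nat.mod_lt _ hp, ?_, ?_⟩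
    · exact (Nat.div_lt_iff_lt_mul hp).2 (by omega)
    · have := Nat.mod_add_div' (a - 1) p
      omega
  have hself : ∀ a, 1 ≤ a → a ≤ k * p + 1 → star (T a) * T a = 1 := by
    intro a h1 h2
    rcases Nat.le_succ_iff.1 h2 with h | rfl
    · obtain ⟨j, l, hj1, hjp, hl, rfl⟩ := hdecomp a h1 h
      rw [hT1 j l hj1 hjp (by omega)]
      have := star_pow_mul_mul_pow_mul hv l 0 (S j) (S j)
      rw [add_zero, pow_zero, one_mul] at this
      rw [this, hS1 j (by simp; omega) j (by simp; omega), if_pos rfl]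
    · rw [hT2, star_pow_mul_pow_self hv]
  have hlt : ∀ a b, 1 ≤ a → a < b → b ≤ k * p + 1 → star (T a) * T b = 0 := by
    intro a b h1 hab h2
    obtain ⟨j, l, hj1, hjp, hl, rfl⟩ := hdecomp a h1 (by omega)
    rw [hT1 j l hj1 hjp (by omega)]
    rcases Nat.le_succ_iff.1 h2 with h | rfl
    · obtain ⟨j', l', hj1', hjp', hl', rfl⟩ := hdecomp b (by omega) h
      rw [hT1 j' l' hj1' hjp' (by omega)]
      rcases lt_trichotomy l l' with hll | rfl | hll
      · exact star_pow_mul_mul_pow_mul_of_lt hv (hSv j hj1 hjp) hll _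
      · have := star_pow_mul_mul_pow_mul hv l 0 (S j) (S j')
        rw [add_zero, pow_zero, one_mul] at this
        rw [this, hS1 j (by simp; omega) j' (by simp; omega), if_neg (by omega)]
      · have := Nat.mul_le_mul_right p hll
        rw [Nat.succ_mul] at this
        omega
    · rw [Nat.succ_eq_add_one, hT2, ← mul_one (S (p + 1) ^ k)]
      exact star_pow_mul_mul_pow_mul_of_lt hv (hSv j hj1 hjp) hl _
  have hsum : ∀ K ≤ k, ∑ a ∈ Finset.Icc 1 (K * p), T a * star (T a) +
      S (p + 1) ^ K * star (S (p + 1) ^ K) = 1 := by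
    intro K
    induction K with
    | zero => simp
    | succ K ih =>
      intro hK
      have hblock : ∑ j ∈ Finset.Icc 1 p, T (j + K * p) * star (T (j + K * p)) =
          S (p + 1) ^ K * (∑ j ∈ Finset.Icc 1 p, S j * star (S j)) * star (S (p + 1) ^ K) := by
        rw [Finset.mul_sum, Finset.sum_mul]
        refine Finset.sum_congr rfl fun j hj => ?_
        rw [Finset.mem_Icc] at hj
        rw [hT1 j K hj.1 hj.2 (by omega), star_mul]
        simp only [mul_assoc]
      rw [Finset.sum_Icc_succ_top (by omega)] at hS2
      rw [Nat.succ_mul, sum_Icc_one_add, hblock, eq_sub_of_add_eq hS2,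
        eq_sub_of_add_eq (ih (by omega)), pow_succ, star_mul]
      noncomm_ring
  refine ⟨fun a ha b hb => ?_, ?_⟩
  · rw [Finset.mem_Icc] at ha hb
    rcases lt_trichotomy a b with h | rfl | h
    · rw [if_neg h.ne, hlt a b ha.1 h hb.2]
    · rw [if_pos rfl, hself a ha.1 ha.2]
    · rw [if_neg h.ne', ← star_star (T b), ← star_mul, hlt b a hb.1 h ha.2, star_zero]
  · rw [Finset.sum_Icc_succ_top (by omega), hT2]
    exact hsum k le_rfl
end

section
/- Let n ≥ 2 and k ≥ 1, and set m := k(n−1)+1. Consider the following m words over the alphabet {1, …, n}: w_{l,j} := n^l j (the letter n repeated l times followed by the letter j) for 0 ≤ l ≤ k−1 and 1 ≤ j ≤ n−1, together with w_m := n^k (the letter n repeated k times). Then: (i) these m words are pairwise distinct and no one of them is a prefix of another; (ii) every word over {1, …, n} of length at least k has exactly one of these m words as a prefix. In other words, they form a maximal (complete) prefix code of size m. -/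
/-- The words `n^l j` (`l < k`, `1 ≤ j ≤ n - 1`) together with `n^k`, built recursively:
a word of the code for `k + 1` is either a single letter `j ≠ n`, or `n` followed by a word of
the code for `k`. -/
def kawamuraCode (n : ℕ) : ℕ → Finset (List ℕ)
  | 0 => {[]}
  | k + 1 => (Finset.Icc 1 (n - 1)).image (fun j => [j]) ∪ (kawamuraCode n k).image (List.cons n)

theorem mem_kawamuraCode_succ {n k : ℕ} {w : List ℕ} :
    w ∈ kawamuraCode n (k + 1) ↔
      (∃ j, (1 ≤ j ∧ j ≤ n - 1) ∧ [j] = w) ∨ ∃ v ∈ kawamuraCode n k, n :: v = w := by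
  simp [kawamuraCode]

theorem mem_kawamuraCode {n k : ℕ} {w : List ℕ} :
    w ∈ kawamuraCode n k ↔
      (∃ l j : ℕ, l < k ∧ 1 ≤ j ∧ j ≤ n - 1 ∧ w = List.replicate l n ++ [j]) ∨
        w = List.replicate k n := by
  induction k generalizing w with
  | zero => simp [kawamuraCode]
  | succ k ih =>
    rw [mem_kawamuraCode_succ]
    constructor
    · rintro (⟨j, ⟨h₁, h₂⟩, rfl⟩ | ⟨v, hv, rfl⟩)
      · exact Or.inl ⟨0, j, by omega, h₁, h₂, rfl⟩
      · rcases ih.1 hv with ⟨l, j, hl, h₁, h₂, rfl⟩ | rfl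
        · exact Or.inl ⟨l + 1, j, by omega, h₁, h₂, rfl⟩
        · exact Or.inr rfl
    · rintro (⟨l, j, hl, h₁, h₂, rfl⟩ | rfl)
      · cases l with
        | zero => exact Or.inl ⟨j, ⟨h₁, h₂⟩, rfl⟩
        | succ l => exact Or.inr ⟨_, ih.2 (Or.inl ⟨l, j, by omega, h₁, h₂, rfl⟩), rfl⟩
      · exact Or.inr ⟨_, ih.2 (Or.inr rfl), rfl⟩

theorem card_kawamuraCode {n : ℕ} (hn : 1 ≤ n) (k : ℕ) :
    (kawamuraCode n k).card = k * (n - 1) + 1 := by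
  induction k with
  | zero => simp [kawamuraCode]
  | succ k ih =>
    rw [kawamuraCode, Finset.card_union_of_disjoint, Finset.card_image_of_injective,
      Finset.card_image_of_injective _ List.cons_injective, ih, Nat.card_Icc]
    · simp only [Nat.add_sub_cancel]
      ring
    · exact fun a b h => by simpa using h
    · rw [Finset.disjoint_left]
      simp only [Finset.mem_image, Finset.mem_Icc]
      rintro _ ⟨j, hj, rfl⟩ ⟨v, -, h⟩
      have := (List.cons.inj h).1
      omega

theorem kawamuraCode_eq_of_prefix {n k : ℕ} (hn : 1 ≤ n) {u v : List ℕ}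
    (hu : u ∈ kawamuraCode n k) (hv : v ∈ kawamuraCode n k) (h : u <+: v) : u = v := by
  induction k generalizing u v with
  | zero => simp_all [kawamuraCode]
  | succ k ih =>
    rcases mem_kawamuraCode_succ.1 hu with ⟨i, hi, rfl⟩ | ⟨u, hu', rfl⟩ <;>
    rcases mem_kawamuraCode_succ.1 hv with ⟨j, hj, rfl⟩ | ⟨v, hv', rfl⟩ <;>
    rw [List.cons_prefix_cons] at h
    · rw [h.1]
    · omega
    · omega
    · rw [ih hu' hv' h.2]

theorem exists_mem_kawamuraCode_prefix {n k : ℕ} {w : List ℕ}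
    (hw : ∀ x ∈ w, x ∈ Finset.Icc 1 n) (hk : k ≤ w.length) :
    ∃ u ∈ kawamuraCode n k, u <+: w := by
  induction k generalizing w with
  | zero => exact ⟨[], by simp [kawamuraCode], List.nil_prefix⟩
  | succ k ih =>
    cases w with
    | nil => simp at hk
    | cons a w =>
      have ha := Finset.mem_Icc.1 (hw a List.mem_cons_self)
      by_cases h : a = n
      · obtain ⟨u, hu, huw⟩ :=
          ih (fun x hx => hw x (List.mem_cons_of_mem _ hx)) (Nat.le_of_succ_le_succ hk)
        exact ⟨n :: u, mem_kawamuraCode_succ.2 (Or.inr ⟨u, hu, rfl⟩),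
          List.cons_prefix_cons.2 ⟨h.symm, huw⟩⟩
      · exact ⟨[a], mem_kawamuraCode_succ.2 (Or.inl ⟨a, by omega, rfl⟩),
          List.cons_prefix_cons.2 ⟨rfl, List.nil_prefix⟩⟩

/-- The `m = k(n-1)+1` words `n^l j` (`0 ≤ l ≤ k-1`, `1 ≤ j ≤ n-1`) and `n^k` over the
alphabet `{1, …, n}` form a maximal prefix code of size `m`: they are pairwise distinct, none
is a proper prefix of another, and every word of length at least `k` over the alphabet has
exactly one of them as a prefix. -/
theorem kawamura_words_maximal_prefix_code
    (n k m : ℕ) (hn : 2 ≤ n) (hk : 1 ≤ k) (hm : m = k * (n - 1) + 1)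
    (C : Set (List ℕ))
    (hC : C = {w | (∃ l j : ℕ, l ≤ k - 1 ∧ 1 ≤ j ∧ j ≤ n - 1 ∧
        w = List.replicate l n ++ [j]) ∨ w = List.replicate k n}) :
    C.ncard = m ∧
    (∀ u ∈ C, ∀ v ∈ C, u <+: v → u = v) ∧
    (∀ w : List ℕ, (∀ x ∈ w, x ∈ Finset.Icc 1 n) → k ≤ w.length →
      ∃! u, u ∈ C ∧ u <+: w) := by
  have hn' : 1 ≤ n := by omega
  have hCk : C = ↑(kawamuraCode n k) := by
    ext w
    rw [hC, Finset.mem_coe, mem_kawamuraCode]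
    simp only [Set.mem_ofPred_eq, Nat.le_sub_one_iff_lt hk]
  subst hCk
  refine ⟨by rw [Set.ncard_coe_finset, card_kawamuraCode hn', hm],
    fun u hu v hv => kawamuraCode_eq_of_prefix hn' hu hv, fun w hw hkw => ?_⟩
  obtain ⟨u, hu, huw⟩ := exists_mem_kawamuraCode_prefix hw hkw
  refine ⟨u, ⟨hu, huw⟩, ?_⟩
  rintro v ⟨hv, hvw⟩
  rcases List.prefix_or_prefix_of_prefix hvw huw with h | h
  · exact kawamuraCode_eq_of_prefix hn' hv hu h
  · exact (kawamuraCode_eq_of_prefix hn' hu hv h).symm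
end

section
/- Let C be a finite set of nonempty words over the alphabet {1, …, n} (n ≥ 2) such that no word of C is a prefix of another word of C, and such that every word over {1, …, n} of length N has a prefix in C, where N is the maximal length of a word in C. Let A be a unital C*-algebra and (S_1, …, S_n) a Cuntz family of n isometries in A. For a word w = (i_1, …, i_r) write S_w := S_{i_1} ⋯ S_{i_r}. Then S_u* S_v = δ_{uv}·1 for all u, v ∈ C, and ∑_{w ∈ C} S_w S_w* = 1; that is, (S_w)_{w ∈ C} is a Cuntz family of |C| isometries in A. -/
section CuntzWords

variable {A ι : Type*} [Ring A] [StarRing A] {I : Finset ι} {S : ι → A}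

theorem star_prod_map_mul_self (hS : ∀ i ∈ I, star (S i) * S i = 1) (u : List ι)
    (hu : ∀ x ∈ u, x ∈ I) : star (u.map S).prod * (u.map S).prod = 1 := by
  induction u with
  | nil => simp
  | cons a u ih =>
    rw [List.forall_mem_cons] at hu
    rw [List.map_cons, List.prod_cons, star_mul, mul_assoc, ← mul_assoc (star (S a)),
      hS a hu.1, one_mul, ih hu.2]

theorem star_prod_map_mul_eq_zero (hS : ∀ i ∈ I, star (S i) * S i = 1)
    (hS' : ∀ i ∈ I, ∀ j ∈ I, i ≠ j → star (S i) * S j = 0) (u v : List ι)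
    (hu : ∀ x ∈ u, x ∈ I) (hv : ∀ x ∈ v, x ∈ I) (huv : ¬u <+: v) (hvu : ¬v <+: u) :
    star (u.map S).prod * (v.map S).prod = 0 := by
  induction u generalizing v with
  | nil => exact absurd v.nil_prefix huv
  | cons a u ih =>
    cases v with
    | nil => exact absurd (a :: u).nil_prefix hvu
    | cons b v =>
      rw [List.forall_mem_cons] at hu hv
      rw [List.map_cons, List.prod_cons, List.map_cons, List.prod_cons, star_mul, mul_assoc,
        ← mul_assoc (star (S a))]
      by_cases hab : a = b
      · subst hab
        rw [List.prefix_cons_inj] at huv hvu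
        rw [hS a hu.1, one_mul, ih v hu.2 hv.2 huv hvu]
      · rw [hS' a hu.1 b hv.1 hab, zero_mul, mul_zero]

/-- An element annihilating `S_w` for every word `w` of length `k` vanishes. -/
theorem eq_zero_of_mul_prod_map_eq_zero (hS : ∑ i ∈ I, S i * star (S i) = 1) (a : A) (k : ℕ)
    (h : ∀ w : List ι, (∀ x ∈ w, x ∈ I) → w.length = k → a * (w.map S).prod = 0) :
    a = 0 := by
  induction k with
  | zero => simpa using h [] (by simp) rfl
  | succ k ih =>
    refine ih fun w hw hk => ?_
    rw [← mul_one (a * _), ← hS, Finset.mul_sum]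
    refine Finset.sum_eq_zero fun i hi => ?_
    have := h (w ++ [i]) (by simpa [or_imp, forall_and, hi] using hw) (by simp [hk])
    rw [List.map_append, List.prod_append, List.map_singleton, List.prod_singleton] at this
    rw [← mul_assoc, mul_assoc a, this, zero_mul]

end CuntzWords


/-- A finite maximal prefix code `C` over the alphabet `{1, …, n}` yields, from a Cuntz family
`S 1, …, S n` of `n` isometries in a unital C*-algebra `A`, a Cuntz family `(S_w)_{w ∈ C}` of
`|C|` isometries, where `S_w` is the product of the `S i` along the word `w`. -/
theorem prefix_code_gives_cuntz_family
    {A : Type*} [CStarAlgebra A] (n : ℕ) (hn : 2 ≤ n)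
    (C : Finset (List ℕ))
    (hne : ∀ w ∈ C, w ≠ [])
    (halph : ∀ w ∈ C, ∀ x ∈ w, x ∈ Finset.Icc 1 n)
    (hpf : ∀ u ∈ C, ∀ v ∈ C, u <+: v → u = v)
    (hmax : ∀ w : List ℕ, (∀ x ∈ w, x ∈ Finset.Icc 1 n) →
      w.length = C.sup List.length → ∃ u ∈ C, u <+: w)
    (S : ℕ → A)
    (hS1 : ∀ i ∈ Finset.Icc 1 n, ∀ j ∈ Finset.Icc 1 n,
      star (S i) * S j = if i = j then 1 else 0)
    (hS2 : ∑ i ∈ Finset.Icc 1 n, S i * star (S i) = 1) :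
    (∀ u ∈ C, ∀ v ∈ C,
      star ((u.map S).prod) * (v.map S).prod = if u = v then 1 else 0) ∧
    ∑ w ∈ C, (w.map S).prod * star ((w.map S).prod) = 1 := by
  have hortho : ∀ u ∈ C, ∀ v ∈ C,
      star ((u.map S).prod) * (v.map S).prod = if u = v then 1 else 0 := by
    intro u hu v hv
    have hiso : ∀ i ∈ Finset.Icc 1 n, star (S i) * S i = 1 := fun i hi => by
      rw [hS1 i hi i hi, if_pos rfl]
    split_ifs with huv
    · subst huv
      exact star_prod_map_mul_self hiso u (halph u hu)
    · exact star_prod_map_mul_eq_zero hiso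
        (fun i hi j hj hij => by rw [hS1 i hi j hj, if_neg hij])
        u v (halph u hu) (halph v hv) (fun h => huv (hpf u hu v hv h))
        (fun h => huv (hpf v hv u hu h).symm)
  refine ⟨hortho, sub_eq_zero.mp (eq_zero_of_mul_prod_map_eq_zero hS2 _ (C.sup List.length) ?_)⟩
  intro w hw hlen
  obtain ⟨u, hu, t, rfl⟩ := hmax w hw hlen
  have hfix : (∑ v ∈ C, (v.map S).prod * star ((v.map S).prod)) * (u.map S).prod =
      (u.map S).prod := by
    rw [Finset.sum_mul, Finset.sum_eq_single_of_mem u hu, mul_assoc, hortho u hu u hu,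
      if_pos rfl, mul_one]
    intro v hv hvu
    rw [mul_assoc, hortho v hv u hu, if_neg hvu, mul_zero]
  rw [List.map_append, List.prod_append, ← mul_assoc, sub_mul, hfix, one_mul, sub_self, zero_mul]
end

section
/- (Main theorem, relations form: existence.) Let p, q ≥ 2 and k, s ≥ 1 be integers with (p−1)k = (q−1)s. Let A be a unital C*-algebra containing a Cuntz family of q isometries. Then the matrix algebra M_k(A) contains a Cuntz family of p isometries, i.e., there exist U_1, …, U_p ∈ M_k(A) with U_a* U_b = δ_{ab}·1_{M_k(A)} for all a, b and ∑_{a=1}^p U_a U_a* = 1_{M_k(A)}. -/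
open Matrix

/-- There is a rectangular unitary matrix over `R` with rows indexed by `m` and columns by `n`;
equivalently, the free Hilbert modules `R^m` and `R^n` are unitarily equivalent. -/
def ExistsUnitaryMatrix (R : Type*) [Ring R] [StarRing R] (m n : Type) [Fintype m] [Fintype n]
    [DecidableEq m] [DecidableEq n] : Prop :=
  ∃ V : Matrix m n R, V * Vᴴ = 1 ∧ Vᴴ * V = 1

namespace ExistsUnitaryMatrix

variable {R : Type*} [Ring R] [StarRing R] {l m n : Type} [Fintype l] [Fintype m] [Fintype n]
  [DecidableEq l] [DecidableEq m] [DecidableEq n]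

theorem of_equiv (e : m ≃ n) : ExistsUnitaryMatrix R m n := by
  refine ⟨(1 : Matrix m m R).submatrix id e.symm, ?_, ?_⟩
  · rw [conjTranspose_submatrix, submatrix_mul_equiv]
    simp
  · rw [conjTranspose_submatrix, ← submatrix_mul _ _ _ _ _ Function.bijective_id]
    simp

theorem of_card_eq (h : Fintype.card m = Fintype.card n) : ExistsUnitaryMatrix R m n :=
  of_equiv (Fintype.equivOfCardEq h)

theorem trans (h₁ : ExistsUnitaryMatrix R l m) (h₂ : ExistsUnitaryMatrix R m n) :
    ExistsUnitaryMatrix R l n := by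
  obtain ⟨V, hV, hV'⟩ := h₁
  obtain ⟨W, hW, hW'⟩ := h₂
  refine ⟨V * W, ?_, ?_⟩
  · rw [conjTranspose_mul, Matrix.mul_assoc, ← Matrix.mul_assoc W, hW, Matrix.one_mul, hV]
  · rw [conjTranspose_mul, Matrix.mul_assoc, ← Matrix.mul_assoc Vᴴ, hV', Matrix.one_mul, hW']

theorem sum_right (l : Type) [Fintype l] [DecidableEq l] (h : ExistsUnitaryMatrix R m n) :
    ExistsUnitaryMatrix R (m ⊕ l) (n ⊕ l) := by
  obtain ⟨V, hV, hV'⟩ := h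
  refine ⟨fromBlocks V 0 0 1, ?_, ?_⟩ <;>
    simp [fromBlocks_conjTranspose, fromBlocks_multiply, hV, hV']

/-- A Cuntz family is a unitary row. -/
theorem of_cuntz_family (S : n → R) (h₁ : ∀ i j, star (S i) * S j = if i = j then 1 else 0)
    (h₂ : ∑ i, S i * star (S i) = 1) : ExistsUnitaryMatrix R Unit n := by
  refine ⟨replicateRow Unit S, ?_, ?_⟩
  · ext i j
    simp [Matrix.mul_apply, h₂]
  · ext i j
    simp [Matrix.mul_apply, h₁, Matrix.one_apply]

/-- A unitary row of length `d + 1` lets the rank of a nonzero free module grow by any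
multiple of `d`. -/
theorem of_card_eq_add_mul {d : ℕ} (h : ExistsUnitaryMatrix R Unit (Fin (d + 1)))
    [Nonempty m] (t : ℕ) (hcard : Fintype.card n = Fintype.card m + d * t) :
    ExistsUnitaryMatrix R m n := by
  obtain ⟨c, hc⟩ : ∃ c, Fintype.card m = c + 1 :=
    Nat.exists_eq_succ_of_ne_zero Fintype.card_ne_zero
  have key : ∀ t : ℕ, ExistsUnitaryMatrix R m (Fin (c + 1 + d * t)) := by
    intro t
    induction t with
    | zero => exact of_card_eq (by simp [hc])
    | succ t ih =>
      refine (ih.trans ?_).trans ((h.sum_right (Fin (c + d * t))).trans ?_)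
      · exact of_card_eq (by simp; ring)
      · exact of_card_eq (by simp; ring)
  exact (key t).trans (of_card_eq (by simp [hcard, hc]))

/-- The square blocks of a unitary matrix of shape `m × (n × m)` form a Cuntz family. -/
theorem exists_cuntz_family (h : ExistsUnitaryMatrix R m (n × m)) :
    ∃ U : n → Matrix m m R, (∀ a b, star (U a) * U b = if a = b then 1 else 0) ∧
      ∑ a, U a * star (U a) = 1 := by
  obtain ⟨V, hV, hV'⟩ := h
  refine ⟨fun a => V.submatrix id (Prod.mk a), fun a b => ?_, ?_⟩
  · ext i j
    have := congrFun (congrFun hV' (a, i)) (b, j)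
    simp only [Matrix.mul_apply, Matrix.one_apply, Prod.mk.injEq] at this
    by_cases hab : a = b <;>
      simpa [star_eq_conjTranspose, Matrix.mul_apply, Matrix.one_apply, hab] using this
  · rw [← hV]
    ext i j
    simp [star_eq_conjTranspose, Matrix.mul_apply, Matrix.sum_apply, Fintype.sum_prod_type]

end ExistsUnitaryMatrix

/-- Main theorem, relations form (existence): if `(p-1)k = (q-1)s` with `p, q ≥ 2` and
`k, s ≥ 1`, and the unital C*-algebra `A` contains a Cuntz family of `q` isometries, then
`M_k(A)` contains a Cuntz family of `p` isometries. -/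
theorem matrix_algebra_contains_cuntz_family
    {A : Type*} [CStarAlgebra A] (p q k s : ℕ)
    (hp : 2 ≤ p) (hq : 2 ≤ q) (hk : 1 ≤ k) (hs : 1 ≤ s)
    (hcong : (p - 1) * k = (q - 1) * s)
    (S : ℕ → A)
    (hS1 : ∀ i ∈ Finset.Icc 1 q, ∀ j ∈ Finset.Icc 1 q,
      star (S i) * S j = if i = j then 1 else 0)
    (hS2 : ∑ i ∈ Finset.Icc 1 q, S i * star (S i) = 1) :
    ∃ U : ℕ → Matrix (Fin k) (Fin k) A,
      (∀ a ∈ Finset.Icc 1 p, ∀ b ∈ Finset.Icc 1 p,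
        star (U a) * U b = if a = b then 1 else 0) ∧
      ∑ a ∈ Finset.Icc 1 p, U a * star (U a) = 1 := by
  obtain ⟨d, rfl⟩ : ∃ d, q = d + 1 := ⟨q - 1, by omega⟩
  obtain ⟨r, rfl⟩ : ∃ r, p = r + 1 := ⟨p - 1, by omega⟩
  simp only [Nat.add_sub_cancel] at hcong
  have hrow : ExistsUnitaryMatrix A Unit (Finset.Icc 1 (d + 1)) :=
    .of_cuntz_family (fun i => S i)
      (fun i j => by simpa only [Subtype.ext_iff] using hS1 i i.2 j j.2)
      ((Finset.sum_coe_sort _ fun i => S i * star (S i)).trans hS2)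
  have : Nonempty (Fin k) := ⟨⟨0, hk⟩⟩
  have hV : ExistsUnitaryMatrix A (Fin k) (Finset.Icc 1 (r + 1) × Fin k) :=
    .of_card_eq_add_mul (d := d) (hrow.trans (.of_card_eq (by simp))) s (by
      rw [← hcong]
      simp
      ring)
  obtain ⟨U, hU1, hU2⟩ := hV.exists_cuntz_family
  refine ⟨fun a => if h : a ∈ Finset.Icc 1 (r + 1) then U ⟨a, h⟩ else 0, fun a ha b hb => ?_, ?_⟩
  · simpa only [dif_pos ha, dif_pos hb, Subtype.mk.injEq] using hU1 ⟨a, ha⟩ ⟨b, hb⟩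
  · rw [← hU2, ← Finset.sum_coe_sort (Finset.Icc 1 (r + 1))]
    exact Finset.sum_congr rfl fun a _ => by simp only [dif_pos a.2]
end

section
/- (Target-bijectivity of the collapsing map g: F_{m,n} → E_n.) Let n ≥ 2, k ≥ 1, m := (n−1)k + 1, and let F_{m,n} be the graph with vertices v_1, …, v_k, line edges l_j: v_j → v_{j+1} (1 ≤ j ≤ k−1), and edges e_1, …, e_m with source v_k, where e_i has target v_{c(i)} with c(i) := k − ⌊(i−1)/(n−1)⌋ for i ≤ m−1 and c(m) := 1. Partition the nk edges of F_{m,n} into n classes: for 1 ≤ a ≤ n−1, class C_a := { e_{(n−1)(k−1−j)+a} : 0 ≤ j ≤ k−1 }, and class C_n := { l_1, …, l_{k−1}, e_m }. Then each class has exactly k edges, and within each class the targets of the edges are pairwise distinct and exhaust all k vertices; i.e., the map sending each edge of C_a to its target is a bijection from C_a onto {v_1, …, v_k} for every a ∈ {1, …, n}. -/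
/-- Target-bijectivity of the collapsing map `g : F_{m,n} → E_n`.  With `m = (n-1)k + 1` and
`c i = k - ⌊(i-1)/(n-1)⌋` for `i ≤ m-1`, `c m = 1`, partition the `nk` edges of `F_{m,n}` into
`n` classes: for `1 ≤ a ≤ n-1`, `C_a = {e_{(n-1)(k-1-j)+a} : 0 ≤ j ≤ k-1}`, and
`C_n = {l_1, …, l_{k-1}, e_m}` (the line edge `l_j` has target `v_{j+1}` and `e_m` has target
`v_1`; below `C_n` is indexed by `j ∈ {1, …, k}`, with index `k` standing for `e_m`).
Then each class has exactly `k` edges, and within each class the targets of the edges are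
pairwise distinct and exhaust all `k` vertices. -/
theorem Fmn_collapsing_target_bijective
    (n k m : ℕ) (hn : 2 ≤ n) (hk : 1 ≤ k) (hm : m = (n - 1) * k + 1)
    (c : ℕ → ℕ)
    (hc : ∀ i, 1 ≤ i → i ≤ m - 1 → c i = k - (i - 1) / (n - 1))
    (hcm : c m = 1) :
    -- the classes `C_a`, `1 ≤ a ≤ n-1`
    (∀ a, 1 ≤ a → a ≤ n - 1 →
      -- `C_a` has exactly `k` (distinct) edges
      ((Finset.range k).image (fun j => (n - 1) * (k - 1 - j) + a)).card = k ∧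
      -- within `C_a` the targets are pairwise distinct
      (∀ j1 ∈ Finset.range k, ∀ j2 ∈ Finset.range k,
        c ((n - 1) * (k - 1 - j1) + a) = c ((n - 1) * (k - 1 - j2) + a) → j1 = j2) ∧
      -- and the targets exhaust all `k` vertices
      (Finset.range k).image (fun j => c ((n - 1) * (k - 1 - j) + a)) = Finset.Icc 1 k) ∧
    -- the class `C_n = {l_1, …, l_{k-1}, e_m}`, indexed by `{1, …, k}` with `k ↦ e_m`:
    -- it has exactly `k` edges
    (Finset.Icc 1 k).card = k ∧
    -- within `C_n` the targets (`l_j ↦ j+1`, `e_m ↦ 1`) are pairwise distinct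
    (∀ j1 ∈ Finset.Icc 1 k, ∀ j2 ∈ Finset.Icc 1 k,
      (if j1 = k then 1 else j1 + 1) = (if j2 = k then 1 else j2 + 1) → j1 = j2) ∧
    -- and the targets exhaust all `k` vertices
    (Finset.Icc 1 k).image (fun j => if j = k then 1 else j + 1) = Finset.Icc 1 k := by
  have target_eq : ∀ a, 1 ≤ a → a ≤ n - 1 → ∀ j < k, c ((n - 1) * (k - 1 - j) + a) = j + 1 := by
    intro a ha han j hj
    have hle : (n - 1) * (k - 1 - j) + (n - 1) ≤ (n - 1) * k := by
      rw [← Nat.mul_succ]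
      exact Nat.mul_le_mul_left _ (by omega)
    rw [hc _ (by omega) (by omega), Nat.add_sub_assoc ha, Nat.mul_add_div (by omega),
      Nat.div_eq_of_lt (by omega)]
    omega
  refine ⟨fun a ha han => ?_, by simp, ?_, ?_⟩
  · have target_inj : ∀ j1 ∈ Finset.range k, ∀ j2 ∈ Finset.range k,
        c ((n - 1) * (k - 1 - j1) + a) = c ((n - 1) * (k - 1 - j2) + a) → j1 = j2 := by
      intro j1 h1 j2 h2 h
      rw [target_eq a ha han j1 (Finset.mem_range.mp h1),
        target_eq a ha han j2 (Finset.mem_range.mp h2)] at h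
      omega
    refine ⟨?_, target_inj, ?_⟩
    · rw [Finset.card_image_of_injOn, Finset.card_range]
      exact fun j1 h1 j2 h2 h => target_inj j1 h1 j2 h2 (congrArg c h)
    · ext x
      simp only [Finset.mem_image, Finset.mem_range, Finset.mem_Icc]
      constructor
      · rintro ⟨j, hj, rfl⟩
        rw [target_eq a ha han j hj]
        omega
      · rintro ⟨h1, h2⟩
        exact ⟨x - 1, by omega, by rw [target_eq a ha han _ (by omega)]; omega⟩
  · intro j1 h1 j2 h2 h
    rw [Finset.mem_Icc] at h1 h2
    split_ifs at h <;> omega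
  · ext x
    simp only [Finset.mem_image, Finset.mem_Icc]
    constructor
    · rintro ⟨j, hj, rfl⟩
      split_ifs <;> omega
    · rintro ⟨h1, h2⟩
      by_cases hx : x = 1
      · exact ⟨k, by omega, by simp [hx]⟩
      · exact ⟨x - 1, by omega, by rw [if_neg (by omega)]; omega⟩
end
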